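/- arXiv:2112.04872 — 2 statements merged into one kernel-verified Lean document; each statement's English description precedes it below -/
import Mathlib

section
/- The number of left-aligned rook placements on 2δ_n having exactly n-2k blocks with exactly one rook equals the number of permutations of {1,...,n+1} with exactly k descents such that every descent is a peak. -/
/-- Rook placements on the double staircase `2δ_n`: one rook per row (row `i`,
numbered from the top starting at `0`, has `2*(i+1)` cells), at most one rook
per column. -/
def RookPlacement (n : ℕ) :=
  {r : Fin n → Fin (2 * n) //
    Function.Injective r ∧ ∀ i : Fin n, (r i : ℕ) < 2 * (i.val + 1)}

/-- Column `c` (0-indexed) of the rook placement `R` contains a rook. -/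
def Occupied {n : ℕ} (R : RookPlacement n) (c : ℕ) : Prop :=
  ∃ j : Fin n, (R.1 j : ℕ) = c

/-- The number of rooks in block `i` of `R` (block `i` consists of the two
columns `2i` and `2i+1`, 0-indexed). -/
def blockRooks {n : ℕ} (R : RookPlacement n) (i : Fin n) : ℕ :=
  (Finset.univ.filter (fun j : Fin n => (R.1 j : ℕ) / 2 = i.val)).card

/-- `R` is left-aligned: no block has a rook in its right column without a rook
in its left column. -/
def LeftAligned {n : ℕ} (R : RookPlacement n) : Prop :=
  ∀ i : Fin n, Occupied R (2 * i.val + 1) → Occupied R (2 * i.val)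

/-- `R` is right-aligned: no block has a rook in its left column without a rook
in its right column. -/
def RightAligned {n : ℕ} (R : RookPlacement n) : Prop :=
  ∀ i : Fin n, Occupied R (2 * i.val) → Occupied R (2 * i.val + 1)

/-- `bor R` is the number of blocks of `R` containing exactly one rook. -/
def bor {n : ℕ} (R : RookPlacement n) : ℕ :=
  (Finset.univ.filter (fun i : Fin n => blockRooks R i = 1)).card

/-- The one-line word of a permutation of `{1, …, m}` extended by the boundary
convention `σ_0 = σ_{m+1} = ⋯ = 0`: `permWord σ i = σ_i` for `1 ≤ i ≤ m`
(values in `{1, …, m}`) and `0` otherwise. -/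
def permWord {m : ℕ} (σ : Equiv.Perm (Fin m)) : ℕ → ℕ := fun i =>
  if h : 1 ≤ i ∧ i ≤ m then (σ ⟨i - 1, by omega⟩).val + 1 else 0

/-- The number of descents of `σ ∈ S_{m}`: positions `1 ≤ i ≤ m - 1` with
`σ_i > σ_{i+1}`. -/
def desCount {m : ℕ} (σ : Equiv.Perm (Fin m)) : ℕ :=
  ((Finset.Icc 1 (m - 1)).filter (fun i => permWord σ (i + 1) < permWord σ i)).card

/-- The number of ascents of `σ ∈ S_{m}`: positions `1 ≤ i ≤ m - 1` with
`σ_i < σ_{i+1}`. -/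
def ascCount {m : ℕ} (σ : Equiv.Perm (Fin m)) : ℕ :=
  ((Finset.Icc 1 (m - 1)).filter (fun i => permWord σ i < permWord σ (i + 1))).card

/-- `σ ∈ S_m` has no double falls: no position `1 ≤ i ≤ m` with
`σ_{i-1} > σ_i > σ_{i+1}` (with the convention `σ_0 = σ_{m+1} = 0`).
Equivalently, every descent of `σ` is a peak. -/
def NoDoubleFall {m : ℕ} (σ : Equiv.Perm (Fin m)) : Prop :=
  ∀ i ∈ Finset.Icc 1 m,
    ¬ (permWord σ i < permWord σ (i - 1) ∧ permWord σ (i + 1) < permWord σ i)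

/-- `σ ∈ S_m` has no double rises: no position `1 ≤ i ≤ m` with
`σ_{i-1} < σ_i < σ_{i+1}` (with the convention `σ_0 = σ_{m+1} = 0`).
Equivalently, every ascent of `σ` is a valley. -/
def NoDoubleRise {m : ℕ} (σ : Equiv.Perm (Fin m)) : Prop :=
  ∀ i ∈ Finset.Icc 1 m,
    ¬ (permWord σ (i - 1) < permWord σ i ∧ permWord σ i < permWord σ (i + 1))

/-- The number of positions of a Boolean word at which `x` is immediately followed by `y`. -/
def pairCount (x y : Bool) : List Bool → ℕ
  | a :: b :: l => (if a = x ∧ b = y then 1 else 0) + pairCount x y (b :: l)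
  | _ => 0

/-- Replace the letter at index `p` by the two letters `true, false`. -/
def splitAtIdx : ℕ → List Bool → List Bool
  | _, [] => []
  | 0, _ :: l => true :: false :: l
  | p + 1, b :: l => b :: splitAtIdx p l

/-- Evaluate `f` at the numbers of valleys, double falls and double rises of an up-down word
(`true` is a rise, `false` is a fall). -/
def wordEval (f : ℕ → ℕ → ℕ → ℕ) (l : List Bool) : ℕ :=
  f (pairCount false true l) (pairCount false false l) (pairCount true true l)

/-- The common transition rule of the two insertion procedures, with `e` peaks
(resp. empty blocks). -/
def transition (f : ℕ → ℕ → ℕ → ℕ) (e v d r : ℕ) : ℕ :=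
  e * (f v d (r + 1) + f v (d + 1) r) + d * f (v + 1) (d - 1) r + r * f (v + 1) d (r - 1)

theorem pairCount_true_false (a : Bool) (l : List Bool)
    (h : (a :: l).getLast (by simp) = false) :
    pairCount true false (a :: l) = pairCount false true (a :: l) + if a then 1 else 0 := by
  induction l generalizing a with
  | nil => cases a <;> simp_all [pairCount]
  | cons b l ih =>
    have := ih b (by simpa using h)
    cases a <;> cases b <;> simp_all [pairCount] <;> omega

theorem sum_splitAtIdx_tail (f : ℕ → ℕ → ℕ → ℕ) (a : Bool) (l : List Bool)
    (h : (a :: l).getLast (by simp) = false) :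
    (∑ p ∈ Finset.range l.length, wordEval f (a :: splitAtIdx p l)) +
        (if a then wordEval f (true :: false :: l) else 0) =
      transition f (pairCount true false (a :: l)) (pairCount false true (a :: l))
        (pairCount false false (a :: l)) (pairCount true true (a :: l)) := by
  induction l generalizing a f with
  | nil => cases a <;> simp_all [pairCount, transition]
  | cons b l ih =>
    have hl := h
    rw [List.getLast_cons (by simp)] at hl
    have key := ih (fun v d r => f (v + if a = false ∧ b = true then 1 else 0)
      (d + if a = false ∧ b = false then 1 else 0)
      (r + if a = true ∧ b = true then 1 else 0)) b hl
    have hs : ∀ p, wordEval (fun v d r => f (v + if a = false ∧ b = true then 1 else 0)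
      (d + if a = false ∧ b = false then 1 else 0)
      (r + if a = true ∧ b = true then 1 else 0)) (b :: splitAtIdx p l)
        = wordEval f (a :: splitAtIdx (p + 1) (b :: l)) := by
      intro p
      simp only [wordEval, splitAtIdx, pairCount]
      simp only [add_comm]
    simp only [hs] at key
    rw [List.length_cons, Finset.sum_range_succ']
    generalize (∑ p ∈ Finset.range l.length, wordEval f (a :: splitAtIdx (p + 1) (b :: l))) = S
      at key ⊢
    clear ih hs h
    cases l with
    | nil =>
      cases b
      · cases a <;> simp_all [transition, wordEval, splitAtIdx, pairCount]
      · simp at hl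
    | cons c l =>
      clear hl
      have hp : ∀ x y a b l, pairCount x y (a :: b :: l) =
        (if a = x ∧ b = y then 1 else 0) + pairCount x y (b :: l) := fun _ _ _ _ _ => rfl
      simp only [wordEval, splitAtIdx, hp] at key ⊢
      generalize pairCount true false (c :: l) = e at *
      generalize pairCount false true (c :: l) = v at *
      generalize pairCount false false (c :: l) = d at *
      generalize pairCount true true (c :: l) = r at *
      clear hp
      cases a <;> cases b <;> cases c <;> cases d <;> cases r <;>
        simp [transition] at key ⊢ <;> ring_nf at key ⊢ <;> omega

theorem sum_splitAtIdx (f : ℕ → ℕ → ℕ → ℕ) (l : List Bool)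
    (h : (true :: l).getLast (by simp) = false) :
    ∑ p ∈ Finset.range (l.length + 1), wordEval f (splitAtIdx p (true :: l)) =
      transition f (pairCount false true (true :: l) + 1) (pairCount false true (true :: l))
        (pairCount false false (true :: l)) (pairCount true true (true :: l)) := by
  have h1 := pairCount_true_false true l h
  rw [if_pos rfl] at h1
  rw [← h1, ← sum_splitAtIdx_tail f true l h, Finset.sum_range_succ']
  simp [splitAtIdx]

/-- The list `[a 0, …, a m]`. -/
def prefixWord (a : ℕ → Bool) : ℕ → List Bool
  | 0 => [a 0]
  | m + 1 => a 0 :: prefixWord (fun i => a (i + 1)) m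

theorem length_prefixWord (a : ℕ → Bool) (m : ℕ) : (prefixWord a m).length = m + 1 := by
  induction m generalizing a <;> simp_all [prefixWord]

theorem prefixWord_ne_nil (a : ℕ → Bool) (m : ℕ) : prefixWord a m ≠ [] := by
  cases m <;> simp [prefixWord]

theorem getLast_prefixWord (a : ℕ → Bool) (m : ℕ) :
    (prefixWord a m).getLast (prefixWord_ne_nil a m) = a m := by
  induction m generalizing a with
  | zero => simp [prefixWord]
  | succ m ih => simp [prefixWord, prefixWord_ne_nil, List.getLast_cons, ih]

theorem pairCount_prefixWord (x y : Bool) (a : ℕ → Bool) (m : ℕ) :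
    pairCount x y (prefixWord a m) =
      ((Finset.range m).filter fun i => a i = x ∧ a (i + 1) = y).card := by
  rw [Finset.card_filter]
  induction m generalizing a with
  | zero => simp [prefixWord, pairCount]
  | succ m ih =>
    rw [Finset.sum_range_succ', ← ih (fun i => a (i + 1))]
    cases m <;> simp [prefixWord, pairCount, add_comm]

theorem prefixWord_congr {a b : ℕ → Bool} {m : ℕ} (h : ∀ i ≤ m, a i = b i) :
    prefixWord a m = prefixWord b m := by
  induction m generalizing a b with
  | zero => simp [prefixWord, h]
  | succ m ih => simp [prefixWord, h 0, ih (fun i hi => h (i + 1) (by omega))]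

theorem splitAtIdx_prefixWord {a b : ℕ → Bool} {m p : ℕ} (hp : p ≤ m)
    (hlt : ∀ i < p, b i = a i) (h0 : b p = true) (h1 : b (p + 1) = false)
    (hgt : ∀ i > p, b (i + 1) = a i) :
    prefixWord b (m + 1) = splitAtIdx p (prefixWord a m) := by
  induction p generalizing a b m with
  | zero =>
    cases m with
    | zero => simp_all [prefixWord, splitAtIdx]
    | succ m =>
      simp only [prefixWord, splitAtIdx, h0, List.cons.injEq, true_and]
      exact ⟨h1, prefixWord_congr fun i _ => hgt (i + 1) (by omega)⟩
  | succ p ih =>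
    cases m with
    | zero => omega
    | succ m =>
      simp only [prefixWord, splitAtIdx]
      rw [hlt 0 (by omega)]
      congr 1
      exact ih (by omega) (fun i hi => hlt (i + 1) (by omega)) h0 h1
        (fun i hi => hgt (i + 1) (by omega))

/-- Insert the new maximum at position `p` of the one-line word of `τ`. -/
def insertMax {m : ℕ} (x : Equiv.Perm (Fin m) × Fin (m + 1)) : Equiv.Perm (Fin (m + 1)) :=
  ((finSuccEquiv' x.2).trans (Equiv.optionCongr x.1)).trans (finSuccEquiv' (Fin.last m)).symm

theorem insertMax_self {m : ℕ} (τ : Equiv.Perm (Fin m)) (p : Fin (m + 1)) :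
    insertMax (τ, p) p = Fin.last m := by
  simp [insertMax]

theorem insertMax_succAbove {m : ℕ} (τ : Equiv.Perm (Fin m)) (p : Fin (m + 1)) (i : Fin m) :
    insertMax (τ, p) (p.succAbove i) = (τ i).castSucc := by
  simp [insertMax]

theorem insertMax_bijective (m : ℕ) : Function.Bijective (insertMax (m := m)) := by
  rw [Fintype.bijective_iff_injective_and_card]
  constructor
  · rintro ⟨τ, p⟩ ⟨τ', p'⟩ h
    have hp : p = p' := by
      apply (insertMax (τ', p')).injective
      rw [insertMax_self, ← h, insertMax_self]
    subst hp
    have : τ = τ' := by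
      ext i : 1
      apply Fin.castSucc_injective
      rw [← insertMax_succAbove τ p, ← insertMax_succAbove τ' p, h]
    rw [this]
  · simp [Fintype.card_perm, Nat.factorial_succ, mul_comm]

theorem permWord_le {m : ℕ} (σ : Equiv.Perm (Fin m)) (i : ℕ) : permWord σ i ≤ m := by
  unfold permWord
  split_ifs
  · exact (σ _).isLt
  · exact Nat.zero_le _

theorem permWord_insertMax_self {m : ℕ} (τ : Equiv.Perm (Fin m)) (p : Fin (m + 1)) :
    permWord (insertMax (τ, p)) (p + 1) = m + 1 := by
  have : (⟨(p : ℕ) + 1 - 1, by omega⟩ : Fin (m + 1)) = p := by ext; simp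
  rw [permWord, dif_pos (by omega), this, insertMax_self, Fin.val_last]

theorem permWord_insertMax_of_le {m : ℕ} (τ : Equiv.Perm (Fin m)) (p : Fin (m + 1)) {i : ℕ}
    (hi : i ≤ p) : permWord (insertMax (τ, p)) i = permWord τ i := by
  unfold permWord
  by_cases h : 1 ≤ i
  · have : (⟨i - 1, by omega⟩ : Fin (m + 1)) = p.succAbove ⟨i - 1, by omega⟩ := by
      rw [Fin.succAbove_of_castSucc_lt]
      · rfl
      · simp [Fin.lt_def]; omega
    rw [dif_pos (by omega), dif_pos (by omega), this, insertMax_succAbove, Fin.val_castSucc]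
  · rw [dif_neg (by omega), dif_neg (by omega)]

theorem permWord_insertMax_of_gt {m : ℕ} (τ : Equiv.Perm (Fin m)) (p : Fin (m + 1)) {i : ℕ}
    (hi : (p : ℕ) < i) : permWord (insertMax (τ, p)) (i + 1) = permWord τ i := by
  unfold permWord
  by_cases h : i ≤ m
  · have : (⟨i + 1 - 1, by omega⟩ : Fin (m + 1)) = p.succAbove ⟨i - 1, by omega⟩ := by
      rw [Fin.succAbove_of_le_castSucc]
      · ext; simp; omega
      · simp [Fin.le_def]; omega
    rw [dif_pos (by omega), dif_pos (by omega), this, insertMax_succAbove, Fin.val_castSucc]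
  · rw [dif_neg (by omega), dif_neg (by omega)]

/-- Whether position `i` of `σ` (with the boundary convention) is not a descent. -/
def isRise {m : ℕ} (σ : Equiv.Perm (Fin m)) (i : ℕ) : Bool :=
  !decide (permWord σ (i + 1) < permWord σ i)

/-- The up-down word of `σ`, including the initial rise and the final fall. -/
def upDownWord {m : ℕ} (σ : Equiv.Perm (Fin m)) : List Bool := prefixWord (isRise σ) m

theorem upDownWord_insertMax {m : ℕ} (τ : Equiv.Perm (Fin m)) (p : Fin (m + 1)) :
    upDownWord (insertMax (τ, p)) = splitAtIdx p (upDownWord τ) := by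
  apply splitAtIdx_prefixWord (by omega)
  · intro i hi
    rw [isRise, isRise, permWord_insertMax_of_le _ _ hi, permWord_insertMax_of_le _ _ hi.le]
  · rw [isRise, permWord_insertMax_self, permWord_insertMax_of_le _ _ le_rfl]
    have := permWord_le τ p
    simp; omega
  · rw [isRise, permWord_insertMax_self, permWord_insertMax_of_gt _ _ (Nat.lt_succ_self _)]
    have := permWord_le τ (p + 1)
    simp; omega
  · intro i hi
    rw [isRise, isRise, permWord_insertMax_of_gt _ _ hi, permWord_insertMax_of_gt _ _ (by omega)]

theorem isRise_zero {m : ℕ} (σ : Equiv.Perm (Fin m)) : isRise σ 0 = true := by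
  simp [isRise, permWord]

theorem isRise_last {n : ℕ} (σ : Equiv.Perm (Fin (n + 1))) : isRise σ (n + 1) = false := by
  simp [isRise, permWord]

theorem sum_insertMax (f : ℕ → ℕ → ℕ → ℕ) {n : ℕ} (τ : Equiv.Perm (Fin (n + 1))) :
    ∑ p, wordEval f (upDownWord (insertMax (τ, p))) =
      wordEval (fun v d r => transition f (v + 1) v d r) (upDownWord τ) := by
  simp only [upDownWord_insertMax]
  rw [Fin.sum_univ_eq_sum_range (fun p => wordEval f (splitAtIdx p (upDownWord τ)))]
  have hw : upDownWord τ = true :: prefixWord (fun i => isRise τ (i + 1)) n := by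
    rw [upDownWord, prefixWord, isRise_zero]
  rw [hw]
  have := sum_splitAtIdx f (prefixWord (fun i => isRise τ (i + 1)) n) (by
    rw [List.getLast_cons (prefixWord_ne_nil _ _), getLast_prefixWord, isRise_last])
  rwa [length_prefixWord] at this

/-- The occupation pattern of block `b`. -/
def blockState (o : ℕ → Bool) (b : ℕ) : Bool × Bool := (o (2 * b), o (2 * b + 1))

/-- The number of indices below `N` with state `x`. -/
def stateCount (N : ℕ) (t : ℕ → Bool × Bool) (x : Bool × Bool) : ℕ :=
  ((Finset.range N).filter fun b => t b = x).card

/-- Evaluate `f` at the numbers of full, right-only and left-only blocks. -/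
def stateEval (f : ℕ → ℕ → ℕ → ℕ) (N : ℕ) (t : ℕ → Bool × Bool) : ℕ :=
  f (stateCount N t (true, true)) (stateCount N t (false, true)) (stateCount N t (true, false))

theorem stateCount_update {N b : ℕ} (hb : b < N) (t : ℕ → Bool × Bool) (x y : Bool × Bool) :
    stateCount N (Function.update t b y) x + (if t b = x then 1 else 0) =
      stateCount N t x + (if y = x then 1 else 0) := by
  have hm : b ∈ Finset.range N := Finset.mem_range.2 hb
  simp only [stateCount, Finset.card_filter]
  rw [← Finset.add_sum_erase _ _ hm, ← Finset.add_sum_erase _ (fun i => if t i = x then 1 else 0) hm,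
    Function.update_self]
  have : ∑ i ∈ (Finset.range N).erase b, (if Function.update t b y i = x then 1 else 0) =
      ∑ i ∈ (Finset.range N).erase b, (if t i = x then 1 else 0) :=
    Finset.sum_congr rfl fun i hi => by
      rw [Function.update_of_ne (Finset.ne_of_mem_erase hi)]
  rw [this]
  omega

theorem sum_comp_state (N : ℕ) (t : ℕ → Bool × Bool) (h : Bool × Bool → ℕ) :
    ∑ b ∈ Finset.range N, h (t b) = ∑ x, stateCount N t x * h x := by
  rw [← Finset.sum_fiberwise' (Finset.range N) t h]
  simp [stateCount]

theorem sum_range_two_mul (g : ℕ → ℕ) (N : ℕ) :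
    ∑ c ∈ Finset.range (2 * N), g c = ∑ b ∈ Finset.range N, (g (2 * b) + g (2 * b + 1)) := by
  induction N with
  | zero => simp
  | succ N ih => rw [mul_add, mul_one, Finset.sum_range_succ, Finset.sum_range_succ,
      Finset.sum_range_succ, ih]; ring

theorem blockState_insert_left (o : ℕ → Bool) (b : ℕ) :
    blockState (fun x => o x || decide (x = 2 * b)) =
      Function.update (blockState o) b (true, o (2 * b + 1)) := by
  funext i
  by_cases h : i = b
  · subst h; simp [blockState]
  · have h2 : 2 * i + 1 ≠ 2 * b := by omega
    simp [blockState, h, h2]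

theorem blockState_insert_right (o : ℕ → Bool) (b : ℕ) :
    blockState (fun x => o x || decide (x = 2 * b + 1)) =
      Function.update (blockState o) b (o (2 * b), true) := by
  funext i
  by_cases h : i = b
  · subst h; simp [blockState]
  · have h2 : 2 * i ≠ 2 * b + 1 := by omega
    simp [blockState, h, h2]

theorem sum_free_columns (f : ℕ → ℕ → ℕ → ℕ) (N : ℕ) (o : ℕ → Bool) :
    (∑ c ∈ Finset.range (2 * N),
        if o c then 0 else stateEval f N (blockState fun x => o x || decide (x = c))) =
      transition f (stateCount N (blockState o) (false, false))
        (stateCount N (blockState o) (true, true)) (stateCount N (blockState o) (false, true))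
        (stateCount N (blockState o) (true, false)) := by
  rw [sum_range_two_mul]
  set t := blockState o with ht
  set v := stateCount N t (true, true) with hv
  set d := stateCount N t (false, true) with hd
  set r := stateCount N t (true, false) with hr
  let h : Bool × Bool → ℕ
    | (false, false) => f v d (r + 1) + f v (d + 1) r
    | (false, true) => f (v + 1) (d - 1) r
    | (true, false) => f (v + 1) d (r - 1)
    | (true, true) => 0
  have hsum : ∑ b ∈ Finset.range N,
      ((if o (2 * b) then 0 else
          stateEval f N (blockState fun x => o x || decide (x = 2 * b))) +
        if o (2 * b + 1) then 0 else
          stateEval f N (blockState fun x => o x || decide (x = 2 * b + 1))) =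
      ∑ b ∈ Finset.range N, h (t b) := by
    refine Finset.sum_congr rfl fun b hb => ?_
    rw [blockState_insert_left, blockState_insert_right, ← ht]
    have hu := stateCount_update (Finset.mem_range.1 hb) t
    have htb : t b = (o (2 * b), o (2 * b + 1)) := rfl
    rw [htb] at hu ⊢
    cases h1 : o (2 * b) <;> cases h2 : o (2 * b + 1)
    all_goals
      simp only [h1, h2] at hu
      have u1 := hu (true, true) (true, true)
      have u2 := hu (false, true) (true, true)
      have u3 := hu (true, false) (true, true)
      have w1 := hu (true, true) (true, false)
      have w2 := hu (false, true) (true, false)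
      have w3 := hu (true, false) (true, false)
      have y1 := hu (true, true) (false, true)
      have y2 := hu (false, true) (false, true)
      have y3 := hu (true, false) (false, true)
      simp only [← hv, ← hd, ← hr, Prod.mk.injEq, Bool.false_eq_true, Bool.true_eq_false,
        and_true, and_false, and_self, if_true, if_false, add_zero]
        at u1 u2 u3 w1 w2 w3 y1 y2 y3
      simp only [h, stateEval, if_true, if_false, Bool.false_eq_true, add_zero, zero_add]
    · rw [w1, w2, w3, y1, y2, y3]
    · rw [u1, u3, ← u2, Nat.add_sub_cancel]
    · rw [u1, u2, ← u3, Nat.add_sub_cancel]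
  rw [hsum, sum_comp_state, Fintype.sum_prod_type]
  simp only [Fintype.sum_bool, h, transition, ← hv, ← hd, ← hr]
  ring

instance (n : ℕ) : Finite (RookPlacement n) := by
  unfold RookPlacement
  infer_instance

noncomputable instance (n : ℕ) : Fintype (RookPlacement n) := Fintype.ofFinite _

/-- Boolean version of `Occupied`. -/
def occupancy {n : ℕ} (R : RookPlacement n) (c : ℕ) : Bool :=
  decide (∃ j : Fin n, (R.1 j : ℕ) = c)

/-- Extend a placement by a rook in the free column `c` of a new bottom row. -/
def addRow {n : ℕ} (R : RookPlacement n) (c : Fin (2 * (n + 1))) (hc : occupancy R c = false) :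
    RookPlacement (n + 1) :=
  ⟨Fin.snoc (α := fun _ => Fin (2 * (n + 1))) (fun j => Fin.castLE (by omega) (R.1 j)) c, by
    have hc' : ∀ j, (R.1 j : ℕ) ≠ c := by simpa [occupancy] using hc
    refine ⟨?_, ?_⟩
    · rw [Fin.snoc_injective_iff]
      refine ⟨fun i j h => R.2.1 (by simpa [Fin.ext_iff] using h), ?_⟩
      rintro ⟨j, hj⟩
      exact hc' j (by simpa [Fin.ext_iff] using hj)
    · intro i
      induction i using Fin.lastCases with
      | last => simp
      | cast i => simpa using R.2.2 i⟩

/-- Delete the bottom row. -/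
def removeRow {n : ℕ} (R : RookPlacement (n + 1)) : RookPlacement n :=
  ⟨fun j => ⟨R.1 j.castSucc, by have := R.2.2 j.castSucc; simp at this; omega⟩,
    fun i j h => by
      have := R.2.1 (Fin.ext (by simpa using h) : R.1 i.castSucc = R.1 j.castSucc)
      simpa using this,
    fun i => R.2.2 i.castSucc⟩

/-- A placement is a placement without its bottom row together with a free column. -/
def rowEquiv (n : ℕ) :
    (Σ R : RookPlacement n, {c : Fin (2 * (n + 1)) // occupancy R c = false}) ≃
      RookPlacement (n + 1) where
  toFun x := addRow x.1 x.2.1 x.2.2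
  invFun R := ⟨removeRow R, R.1 (Fin.last n), by
    refine decide_eq_false ?_
    rintro ⟨j, h⟩
    exact (Fin.castSucc_lt_last j).ne (R.2.1 (Fin.ext h))⟩
  left_inv := by
    rintro ⟨R, c, hc⟩
    have h1 : removeRow (addRow R c hc) = R := by
      apply Subtype.ext
      funext j
      simp [removeRow, addRow]
    refine Sigma.subtype_ext h1 ?_
    simp [addRow]
  right_inv R := by
    apply Subtype.ext
    funext i
    induction i using Fin.lastCases with
    | last => simp [addRow]
    | cast i => simp [addRow, removeRow]

theorem occupancy_addRow {n : ℕ} (R : RookPlacement n) (c : Fin (2 * (n + 1)))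
    (hc : occupancy R c = false) :
    occupancy (addRow R c hc) = fun x => occupancy R x || decide (x = c) := by
  funext x
  rw [Bool.eq_iff_iff]
  simp [occupancy, addRow, Fin.exists_fin_succ', eq_comm (a := x)]

theorem occupancy_eq_false {n : ℕ} (R : RookPlacement n) {c : ℕ} (hc : 2 * n ≤ c) :
    occupancy R c = false := by
  simp only [occupancy, decide_eq_false_iff_not, not_exists]
  intro j
  omega

theorem sum_stateCount (N : ℕ) (t : ℕ → Bool × Bool) : ∑ x, stateCount N t x = N := by
  simpa using (sum_comp_state N t fun _ => 1).symm

theorem sum_occupancy {n : ℕ} (R : RookPlacement n) :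
    ∑ c ∈ Finset.range (2 * n), (if occupancy R c then 1 else 0) = n := by
  rw [← Finset.card_filter]
  have : (Finset.range (2 * n)).filter (fun c => occupancy R c = true) =
      Finset.univ.image fun j => (R.1 j : ℕ) := by
    ext c
    simp only [Finset.mem_filter, Finset.mem_range, occupancy, decide_eq_true_eq,
      Finset.mem_image, Finset.mem_univ, true_and, and_iff_right_iff_imp]
    rintro ⟨j, rfl⟩
    exact (R.1 j).isLt
  rw [this]
  exact (Finset.card_image_of_injective _ (Fin.val_injective.comp R.2.1)).trans (by simp)

theorem stateCount_balance {n : ℕ} (R : RookPlacement n) :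
    2 * stateCount n (blockState (occupancy R)) (true, true) +
      stateCount n (blockState (occupancy R)) (false, true) +
      stateCount n (blockState (occupancy R)) (true, false) = n := by
  have h := sum_occupancy R
  rw [sum_range_two_mul] at h
  have h2 := sum_comp_state n (blockState (occupancy R))
    fun x => (if x.1 then 1 else 0) + (if x.2 then 1 else 0)
  replace h2 := h.symm.trans h2
  rw [Fintype.sum_prod_type] at h2
  simp at h2
  omega

theorem stateCount_empty {n : ℕ} (R : RookPlacement n) :
    stateCount n (blockState (occupancy R)) (false, false) =
      stateCount n (blockState (occupancy R)) (true, true) := by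
  have h1 := stateCount_balance R
  have h2 := sum_stateCount n (blockState (occupancy R))
  rw [Fintype.sum_prod_type] at h2
  simp at h2
  omega

theorem stateCount_succ {n : ℕ} (R : RookPlacement n) (x : Bool × Bool) :
    stateCount (n + 1) (blockState (occupancy R)) x =
      stateCount n (blockState (occupancy R)) x + if x = (false, false) then 1 else 0 := by
  simp only [stateCount, Finset.card_filter, Finset.sum_range_succ]
  simp only [blockState, occupancy_eq_false R (le_refl (2 * n)),
    occupancy_eq_false R (Nat.le_succ (2 * n)), eq_comm]

theorem sum_addRow (f : ℕ → ℕ → ℕ → ℕ) {n : ℕ} (R : RookPlacement n) :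
    ∑ c : {c : Fin (2 * (n + 1)) // occupancy R c = false},
        stateEval f (n + 1) (blockState (occupancy (addRow R c.1 c.2))) =
      stateEval (fun v d r => transition f (v + 1) v d r) n (blockState (occupancy R)) := by
  simp only [occupancy_addRow]
  have h := sum_free_columns f (n + 1) (occupancy R)
  simp only [stateCount_succ, stateCount_empty] at h
  simp only [Prod.mk.injEq, Bool.true_eq_false, and_false, and_true, and_self, if_true, if_false,
    add_zero] at h
  rw [stateEval, ← h, ← Fin.sum_univ_eq_sum_range (fun c => if occupancy R c = true then 0 else
    stateEval f (n + 1) (blockState fun x => occupancy R x || decide (x = c)))]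
  rw [← Finset.sum_subtype (Finset.univ.filter fun c : Fin (2 * (n + 1)) => occupancy R c = false)
    (by simp) (fun c : Fin (2 * (n + 1)) => stateEval f (n + 1)
      (blockState fun x => occupancy R x || decide (x = c))), Finset.sum_filter]
  refine Finset.sum_congr rfl fun c _ => ?_
  cases occupancy R c <;> simp

theorem sum_stateEval_eq_sum_wordEval (n : ℕ) (f : ℕ → ℕ → ℕ → ℕ) :
    ∑ R : RookPlacement n, stateEval f n (blockState (occupancy R)) =
      ∑ σ : Equiv.Perm (Fin (n + 1)), wordEval f (upDownWord σ) := by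
  induction n generalizing f with
  | zero =>
    have hR : Fintype.card (RookPlacement 0) = 1 := by
      rw [← Nat.card_eq_fintype_card]
      unfold RookPlacement
      rw [Nat.card_eq_one_iff_unique]
      exact ⟨⟨fun a b => Subtype.ext (Subsingleton.elim _ _)⟩,
        ⟨⟨Fin.elim0, fun i => i.elim0, fun i => i.elim0⟩⟩⟩
    have hσ : ∀ σ : Equiv.Perm (Fin (0 + 1)), wordEval f (upDownWord σ) = f 0 0 0 := by
      intro σ
      simp [upDownWord, prefixWord, isRise_zero, isRise_last σ, wordEval, pairCount]
    simp only [hσ]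
    simp [stateEval, stateCount, hR]
  | succ n ih =>
    rw [← (rowEquiv n).sum_comp, Fintype.sum_sigma,
      ← (Equiv.ofBijective _ (insertMax_bijective (n + 1))).sum_comp, Fintype.sum_prod_type]
    simp only [Equiv.ofBijective_apply, sum_insertMax, ← ih]
    exact Finset.sum_congr rfl fun R _ => sum_addRow f R

theorem noDoubleFall_iff {m : ℕ} (σ : Equiv.Perm (Fin m)) :
    NoDoubleFall σ ↔ pairCount false false (upDownWord σ) = 0 := by
  rw [upDownWord, pairCount_prefixWord, Finset.card_eq_zero, Finset.filter_eq_empty_iff]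
  simp only [NoDoubleFall, isRise, Bool.not_eq_false', decide_eq_true_eq, Finset.mem_Icc,
    Finset.mem_range]
  constructor
  · intro h i hi
    exact h (i + 1) (by omega)
  · intro h i hi
    obtain ⟨j, rfl⟩ : ∃ j, i = j + 1 := ⟨i - 1, by omega⟩
    exact h (by omega)

theorem desCount_eq {n : ℕ} (σ : Equiv.Perm (Fin (n + 1))) :
    desCount σ =
      pairCount false true (upDownWord σ) + pairCount false false (upDownWord σ) := by
  rw [upDownWord, pairCount_prefixWord, pairCount_prefixWord]
  simp only [Finset.card_filter, ← Finset.sum_add_distrib]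
  have h : ∀ i, ((if isRise σ i = false ∧ isRise σ (i + 1) = true then 1 else 0) +
      if isRise σ i = false ∧ isRise σ (i + 1) = false then 1 else 0) =
      if isRise σ i = false then 1 else 0 := by
    intro i
    cases isRise σ i <;> cases isRise σ (i + 1) <;> rfl
  simp only [h]
  rw [Finset.sum_range_succ', isRise_zero, desCount, Finset.card_filter, Nat.add_sub_cancel,
    ← Finset.Ico_succ_right_eq_Icc, Finset.sum_Ico_eq_sum_range]
  simp [isRise, add_comm]

theorem blockRooks_eq {n : ℕ} (R : RookPlacement n) (i : Fin n) :
    blockRooks R i = (if occupancy R (2 * i) then 1 else 0) +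
      if occupancy R (2 * i + 1) then 1 else 0 := by
  have hcol : ∀ c, (Finset.univ.filter fun j : Fin n => (R.1 j : ℕ) = c).card =
      if occupancy R c then 1 else 0 := by
    intro c
    split_ifs with h
    · obtain ⟨j, hj⟩ : ∃ j : Fin n, (R.1 j : ℕ) = c := by simpa [occupancy] using h
      rw [Finset.card_eq_one]
      refine ⟨j, ?_⟩
      ext k
      simp only [Finset.mem_filter, Finset.mem_univ, true_and, Finset.mem_singleton]
      exact ⟨fun hk => R.2.1 (Fin.ext (hk.trans hj.symm)), fun hk => hk ▸ hj⟩
    · rw [Finset.card_eq_zero, Finset.filter_eq_empty_iff]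
      intro j _ hj
      exact h (by simpa [occupancy] using ⟨j, hj⟩)
  rw [← hcol, ← hcol, ← Finset.card_union_of_disjoint, ← Finset.filter_or, blockRooks]
  · congr 1
    ext j
    simp only [Finset.mem_filter, Finset.mem_univ, true_and]
    omega
  · rw [Finset.disjoint_filter]
    intro j _ h
    omega

theorem bor_eq {n : ℕ} (R : RookPlacement n) :
    bor R = stateCount n (blockState (occupancy R)) (false, true) +
      stateCount n (blockState (occupancy R)) (true, false) := by
  simp only [bor, stateCount, Finset.card_filter, ← Finset.sum_add_distrib]
  rw [← Fin.sum_univ_eq_sum_range (fun i =>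
    (if blockState (occupancy R) i = (false, true) then 1 else 0) +
      if blockState (occupancy R) i = (true, false) then 1 else 0)]
  refine Finset.sum_congr rfl fun i _ => ?_
  rw [blockRooks_eq, blockState]
  cases occupancy R (2 * i) <;> cases occupancy R (2 * i + 1) <;> rfl

theorem leftAligned_iff {n : ℕ} (R : RookPlacement n) :
    LeftAligned R ↔ stateCount n (blockState (occupancy R)) (false, true) = 0 := by
  rw [stateCount, Finset.card_eq_zero, Finset.filter_eq_empty_iff]
  simp only [LeftAligned, Occupied, blockState, occupancy, Finset.mem_range, Prod.mk.injEq,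
    decide_eq_false_iff_not, decide_eq_true_eq, not_and', not_not]
  exact ⟨fun h i hi => h ⟨i, hi⟩, fun h i => h i.isLt⟩

/-- The number of left-aligned rook placements on `2δ_n` having exactly
`n - 2k` blocks with exactly one rook equals the number of permutations of
`{1, …, n+1}` with exactly `k` descents such that every descent is a peak
(i.e. with no double falls). -/
theorem left_aligned_count_eq_gamma (n k : ℕ) (hk : 2 * k ≤ n) :
    Nat.card {R : RookPlacement n // LeftAligned R ∧ bor R = n - 2 * k} =
      Nat.card {σ : Equiv.Perm (Fin (n + 1)) // desCount σ = k ∧ NoDoubleFall σ} := by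
  classical
  have h := sum_stateEval_eq_sum_wordEval n fun v d _ => if v = k ∧ d = 0 then 1 else 0
  simp only [stateEval, wordEval, ← Finset.card_filter] at h
  rw [Nat.card_eq_fintype_card, Nat.card_eq_fintype_card, Fintype.card_subtype,
    Fintype.card_subtype]
  convert h using 3
  · rename_i R _
    rw [leftAligned_iff, bor_eq]
    have := stateCount_balance R
    omega
  · rename_i σ _
    rw [noDoubleFall_iff, desCount_eq]
    omega
end

section
/- The number of right-aligned rook placements on 2δ_n having exactly n-2k blocks with exactly one rook equals the number of permutations of {1,...,n+1} with exactly k ascents such that every ascent is a valley. -/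
open Polynomial in
/-- The operator raising the size by one in the linear recurrence of `gammaPoly`. -/
noncomputable def gammaStep (a : ℤ) (p : ℤ[X]) : ℤ[X] :=
  (1 + 2 * (a : ℤ[X]) * X) * p + (X - 4 * X ^ 2) * derivative p

open Polynomial in
/-- The type `A` gamma polynomials, indexed by the size of the permuted set
(and `0` at size `0`). -/
noncomputable def gammaPoly : ℕ → ℤ[X]
  | 0 => 0
  | 1 => 1
  | m + 2 => gammaStep m (gammaPoly (m + 1))

open Polynomial in
/-- The binomial convolution square of `gammaPoly`. -/
noncomputable def gammaConv (m : ℕ) : ℤ[X] :=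
  ∑ ij ∈ Finset.HasAntidiagonal.antidiagonal m, m.choose ij.1 • (gammaPoly ij.1 * gammaPoly ij.2)

open Polynomial in
theorem gammaPoly_succ (m : ℕ) :
    gammaPoly (m + 1) = gammaStep (m - 1) (gammaPoly m) + if m = 0 then 1 else 0 := by
  cases m with
  | zero => simp [gammaPoly, gammaStep]
  | succ m => simp [gammaPoly]

open Polynomial in
theorem gammaConv_succ (m : ℕ) :
    gammaConv (m + 1) = (2 + 2 * ((m : ℤ[X]) - 2) * X) * gammaConv m
      + (X - 4 * X ^ 2) * derivative (gammaConv m) + 2 * gammaPoly m := by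
  have h1 : ∑ ij ∈ Finset.HasAntidiagonal.antidiagonal m,
      (m.choose ij.1 • (gammaPoly ij.1 * (if ij.2 = 0 then (1 : ℤ[X]) else 0))) = gammaPoly m := by
    rw [Finset.sum_eq_single (m, 0)]
    · simp
    · rintro ⟨i, j⟩ hij hne
      have : j ≠ 0 := by
        rintro rfl
        simp_all
      simp [this]
    · simp
  have h2 : ∑ ij ∈ Finset.HasAntidiagonal.antidiagonal m,
      (m.choose ij.1 • ((if ij.1 = 0 then (1 : ℤ[X]) else 0) * gammaPoly ij.2)) = gammaPoly m := by
    rw [Finset.sum_eq_single (0, m)]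
    · simp
    · rintro ⟨i, j⟩ hij hne
      have : i ≠ 0 := by
        rintro rfl
        simp_all
      simp [this]
    · simp
  have h3 : 2 * gammaPoly m = gammaPoly m + gammaPoly m := by ring
  rw [h3]
  nth_rewrite 1 [← h1]
  rw [← h2]
  unfold gammaConv
  rw [Finset.sum_antidiagonal_choose_succ_nsmul (fun i j => gammaPoly i * gammaPoly j),
    derivative_sum, Finset.mul_sum, Finset.mul_sum, ← Finset.sum_add_distrib,
    ← Finset.sum_add_distrib, ← Finset.sum_add_distrib, ← Finset.sum_add_distrib]
  refine Finset.sum_congr rfl ?_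
  rintro ⟨i, j⟩ hij
  rw [Finset.HasAntidiagonal.mem_antidiagonal] at hij
  have hc : m.choose j = m.choose i := by
    simp only at hij
    subst hij
    rw [Nat.choose_symm_add]
  have hm : (m : ℤ[X]) = i + j := by rw [← hij]; push_cast; ring
  simp only [hc, gammaPoly_succ, gammaStep, hm, nsmul_eq_mul, derivative_mul,
    derivative_natCast]
  push_cast
  ring

open Polynomial in
/-- The quadratic recurrence satisfied by `gammaPoly`. -/
theorem gammaPoly_succ_eq_conv (m : ℕ) :
    gammaPoly (m + 1) = (if m = 0 then 1 else 0) + gammaPoly m + X * gammaConv m := by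
  induction m with
  | zero => simp [gammaPoly, gammaConv]
  | succ m ih =>
    rcases Nat.eq_zero_or_pos m with rfl | hm
    · simp [gammaPoly, gammaConv, gammaStep, Finset.Nat.antidiagonal_succ]
    · have h : gammaPoly (m + 1) = gammaStep (m - 1) (gammaPoly m) := by
        simp [gammaPoly_succ, hm.ne']
      rw [gammaPoly_succ (m + 1), gammaConv_succ]
      nth_rewrite 2 [h]
      rw [ih]
      simp [gammaStep, hm.ne']
      ring

/-- The number of ascents of a word. -/
def listAsc : List ℕ → ℕ
  | [] => 0
  | [_] => 0
  | x :: y :: l => (if x < y then 1 else 0) + listAsc (y :: l)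

/-- The word has no double rise, where `b` says whether its first letter is reached by a rise. -/
def ListNDR : Bool → List ℕ → Prop
  | _, [] => True
  | _, [_] => True
  | b, x :: y :: l => if x < y then b = false ∧ ListNDR true (y :: l) else ListNDR false (y :: l)

theorem listAsc_append_cons (m : ℕ) (A B : List ℕ) (hA : ∀ a ∈ A, m < a) (hB : ∀ b ∈ B, m < b) :
    listAsc (A ++ m :: B) = listAsc A + listAsc B + if B = [] then 0 else 1 := by
  induction A with
  | nil =>
    cases B with
    | nil => simp [listAsc]
    | cons b B =>
      have := hB b (by simp)
      simp [listAsc, this]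
      omega
  | cons a A ih =>
    have ih := ih fun x hx => hA x (by simp [hx])
    have ha := hA a (by simp)
    cases A with
    | nil =>
      simp only [List.nil_append, List.cons_append, listAsc] at ih ⊢
      rw [ih, if_neg (by omega)]
      omega
    | cons a' A =>
      simp only [List.cons_append, listAsc] at ih ⊢
      rw [ih]
      omega

theorem listNDR_append_cons (m : ℕ) (A B : List ℕ) (hA : ∀ a ∈ A, m < a) (hB : ∀ b ∈ B, m < b)
    (c : Bool) (h : A ≠ [] ∨ c = false) :
    ListNDR c (A ++ m :: B) ↔ ListNDR c A ∧ ListNDR true B := by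
  induction A generalizing c with
  | nil =>
    cases B with
    | nil => simp [ListNDR]
    | cons b B =>
      have := hB b (by simp)
      simp at h
      simp [ListNDR, this, h]
  | cons a A ih =>
    have ih := ih fun x hx => hA x (by simp [hx])
    have ha := hA a (by simp)
    cases A with
    | nil =>
      have := ih false (by simp)
      simp only [List.nil_append, List.cons_append, ListNDR] at this ⊢
      rw [if_neg (by omega), this]
    | cons a' A =>
      simp only [List.cons_append, ListNDR] at ih ⊢
      split_ifs
      · rw [ih true (by simp), and_assoc]
      · exact ih false (by simp)

theorem not_listNDR_cons (m : ℕ) (B : List ℕ) (hB : ∀ b ∈ B, m < b) (h : B ≠ []) :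
    ¬ ListNDR true (m :: B) := by
  cases B with
  | nil => exact absurd rfl h
  | cons b B => simp [ListNDR, hB b (by simp)]

open Classical in
/-- The nonempty words without double rises that use every letter of `s` exactly once. -/
noncomputable def ndrWords (s : Finset ℕ) : Finset (List ℕ) :=
  s.val.lists.toFinset.filter fun l => l ≠ [] ∧ ListNDR true l

theorem mem_ndrWords {s : Finset ℕ} {l : List ℕ} :
    l ∈ ndrWords s ↔ s.val = ↑l ∧ l ≠ [] ∧ ListNDR true l := by
  simp [ndrWords, Multiset.mem_lists_iff]

theorem val_eq_coe_iff {s : Finset ℕ} {l : List ℕ} : s.val = ↑l ↔ l.Nodup ∧ l.toFinset = s := by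
  constructor
  · intro h
    have hn : l.Nodup := by
      have := s.nodup
      rwa [h, Multiset.coe_nodup] at this
    refine ⟨hn, ?_⟩
    ext x
    rw [List.mem_toFinset, ← Finset.mem_val, h, Multiset.mem_coe]
  · rintro ⟨h, rfl⟩
    rw [List.toFinset_val, h.dedup]

open Polynomial in
/-- The ascent enumerator of `ndrWords s`. -/
noncomputable def ascPoly (s : Finset ℕ) : ℤ[X] := ∑ l ∈ ndrWords s, X ^ listAsc l

/-- Words without double rises, decomposed at their smallest letter. -/
theorem mem_ndrWords_insert {m : ℕ} {s : Finset ℕ} (hm : ∀ x ∈ s, m < x) {l : List ℕ} :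
    l ∈ ndrWords (insert m s) ↔
      (s = ∅ ∧ l = [m]) ∨ (∃ A ∈ ndrWords s, l = A ++ [m]) ∨
      ∃ u ∈ s.powerset, ∃ A ∈ ndrWords u, ∃ B ∈ ndrWords (s \ u), l = A ++ m :: B := by
  have hms : m ∉ s := fun h => lt_irrefl _ (hm m h)
  simp only [mem_ndrWords, val_eq_coe_iff]
  constructor
  · rintro ⟨⟨hn, hs⟩, -, hl⟩
    have hml : m ∈ l := by rw [← List.mem_toFinset, hs]; simp
    obtain ⟨A, B, rfl⟩ := List.append_of_mem hml
    have hs' : ∀ x, (x ∈ A ∨ x = m ∨ x ∈ B) ↔ (x = m ∨ x ∈ s) := fun x => by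
      have := congrArg (x ∈ ·) hs
      simp at this
      tauto
    simp only [List.nodup_append, List.nodup_cons, List.mem_cons] at hn
    obtain ⟨hnA, ⟨hmB, hnB⟩, hd⟩ := hn
    have hA : ∀ a ∈ A, a ∈ s := fun a ha => by
      have h1 := (hs' a).1 (Or.inl ha)
      have h2 := hd a ha m (Or.inl rfl)
      tauto
    have hB : ∀ a ∈ B, a ∈ s := fun a ha => by
      rcases (hs' a).1 (Or.inr (Or.inr ha)) with rfl | h
      · exact absurd ha hmB
      · exact h
    have hs2 : ∀ x ∈ s, x ∈ A ∨ x ∈ B := fun x hx => by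
      rcases (hs' x).2 (Or.inr hx) with h | rfl | h
      · exact Or.inl h
      · exact absurd hx hms
      · exact Or.inr h
    by_cases hAe : A = []
    · subst hAe
      by_cases hBe : B = []
      · subst hBe
        left
        refine ⟨Finset.eq_empty_of_forall_notMem fun x hx => ?_, rfl⟩
        simpa using hs2 x hx
      · exact absurd hl (not_listNDR_cons m B (fun b hb => hm b (hB b hb)) hBe)
    · rw [listNDR_append_cons m A B (fun b hb => hm b (hA b hb)) (fun b hb => hm b (hB b hb)) _
        (Or.inl hAe)] at hl
      right
      by_cases hBe : B = []
      · subst hBe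
        left
        refine ⟨A, ⟨⟨hnA, ?_⟩, hAe, hl.1⟩, rfl⟩
        ext x
        simp only [List.mem_toFinset]
        exact ⟨hA x, fun hx => by simpa using hs2 x hx⟩
      · right
        refine ⟨A.toFinset, ?_, A, ⟨⟨hnA, rfl⟩, hAe, hl.1⟩, B, ⟨⟨hnB, ?_⟩, hBe, hl.2⟩, rfl⟩
        · rw [Finset.mem_powerset]
          exact fun x hx => hA x (by simpa using hx)
        · ext x
          simp only [List.mem_toFinset, Finset.mem_sdiff]
          refine ⟨fun hx => ⟨hB x hx, fun h => hd x h x (Or.inr hx) rfl⟩, fun hx => ?_⟩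
          have := hs2 x hx.1
          tauto
  · rintro (⟨rfl, rfl⟩ | ⟨A, ⟨⟨hn, rfl⟩, hAe, hl⟩, rfl⟩ |
      ⟨u, hu, A, ⟨⟨hn, rfl⟩, hAe, hl⟩, B, ⟨⟨hnB, hB⟩, hBe, hlB⟩, rfl⟩)
    · simp [ListNDR]
    · have hm' : ∀ a ∈ A, m < a := fun a ha => hm a (by simpa using ha)
      refine ⟨⟨?_, ?_⟩, by simp, ?_⟩
      · rw [List.nodup_append]
        refine ⟨hn, by simp, ?_⟩
        intro a ha b hb
        have := hm' a ha
        simp at hb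
        omega
      · ext x
        simp
      · rw [listNDR_append_cons m A [] hm' (by simp) _ (Or.inl hAe)]
        exact ⟨hl, by simp [ListNDR]⟩
    · rw [Finset.mem_powerset] at hu
      have hB' : ∀ x, x ∈ B ↔ x ∈ s ∧ x ∉ A := fun x => by
        have := congrArg (x ∈ ·) hB
        simpa using this
      have hA' : ∀ x ∈ A, x ∈ s := fun x hx => hu (by simpa using hx)
      have hmB : ∀ b ∈ B, m < b := fun b hb => hm b ((hB' b).1 hb).1
      refine ⟨⟨?_, ?_⟩, by simp, ?_⟩
      · rw [List.nodup_append, List.nodup_cons]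
        refine ⟨hn, ⟨fun h => lt_irrefl _ (hmB m h), hnB⟩, ?_⟩
        intro a ha b hb
        rw [List.mem_cons] at hb
        rintro rfl
        rcases hb with rfl | hb
        · exact hms (hA' _ ha)
        · exact ((hB' a).1 hb).2 ha
      · ext x
        simp only [List.mem_toFinset, List.mem_append, List.mem_cons, Finset.mem_insert, hB' x]
        have := hA' x
        tauto
      · rw [listNDR_append_cons m A B (fun a ha => hm a (hA' a ha)) hmB _ (Or.inl hAe)]
        exact ⟨hl, hlB⟩

theorem append_cons_inj {m : ℕ} {A B A' B' : List ℕ} (hA : m ∉ A) (hA' : m ∉ A')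
    (h : A ++ m :: B = A' ++ m :: B') : A = A' ∧ B = B' := by
  induction A generalizing A' with
  | nil =>
    cases A' with
    | nil => simpa using h
    | cons a A' =>
      simp at h hA'
      exact absurd h.1 hA'.1
  | cons a A ih =>
    cases A' with
    | nil =>
      simp at h hA
      exact absurd h.1.symm hA.1
    | cons a' A' =>
      simp at h hA hA' ⊢
      obtain ⟨h1, h2⟩ := ih hA.2 hA'.2 h.2
      exact ⟨⟨h.1, h1⟩, h2⟩

open Polynomial in
theorem ascPoly_insert {m : ℕ} {s : Finset ℕ} (hm : ∀ x ∈ s, m < x) :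
    ascPoly (insert m s) = (if s = ∅ then 1 else 0) + ascPoly s +
      X * ∑ u ∈ s.powerset, ascPoly u * ascPoly (s \ u) := by
  classical
  have hmem : ∀ {u : Finset ℕ} {A : List ℕ}, A ∈ ndrWords u → ∀ x, x ∈ A ↔ x ∈ u := by
    intro u A hA x
    rw [mem_ndrWords, val_eq_coe_iff] at hA
    rw [← hA.1.2, List.mem_toFinset]
  have hne : ∀ {u : Finset ℕ} {A : List ℕ}, A ∈ ndrWords u → A ≠ [] := fun hA =>
    (mem_ndrWords.1 hA).2.1
  have hms : m ∉ s := fun h => lt_irrefl _ (hm m h)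
  let T1 : Finset (List ℕ) := if s = ∅ then {[m]} else ∅
  let T2 : Finset (List ℕ) := (ndrWords s).image fun A => A ++ [m]
  let I : Finset (Σ _ : Finset ℕ, List ℕ × List ℕ) :=
    s.powerset.sigma fun u => ndrWords u ×ˢ ndrWords (s \ u)
  let T3 : Finset (List ℕ) := I.image fun p => p.2.1 ++ m :: p.2.2
  have hI : ∀ {p}, p ∈ I ↔ p.1 ⊆ s ∧ p.2.1 ∈ ndrWords p.1 ∧ p.2.2 ∈ ndrWords (s \ p.1) := by
    intro p
    simp [I]
  have hT : ndrWords (insert m s) = T1 ∪ (T2 ∪ T3) := by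
    ext l
    rw [mem_ndrWords_insert hm]
    simp only [Finset.mem_union, T2, T3, Finset.mem_image, hI, T1]
    refine or_congr ?_ (or_congr ?_ ?_)
    · split_ifs with h <;> simp [h]
    · simp [eq_comm]
    · constructor
      · rintro ⟨u, hu, A, hA, B, hB, rfl⟩
        exact ⟨⟨u, A, B⟩, ⟨by simpa using hu, hA, hB⟩, rfl⟩
      · rintro ⟨⟨u, A, B⟩, ⟨hu, hA, hB⟩, rfl⟩
        exact ⟨u, by simpa using hu, A, hA, B, hB, rfl⟩
  have hmT : ∀ {p}, p ∈ I → m ∉ p.2.1 := fun hp h =>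
    hms ((hI.1 hp).1 ((hmem (hI.1 hp).2.1 _).1 h))
  have d1 : Disjoint T1 (T2 ∪ T3) := by
    rw [Finset.disjoint_left]
    intro l h1 h2
    simp only [T1] at h1
    split_ifs at h1 with h
    · simp only [Finset.mem_singleton] at h1
      subst h1 h
      simp only [T2, T3, Finset.mem_union, Finset.mem_image] at h2
      rcases h2 with ⟨A, hA, h2⟩ | ⟨p, hp, h2⟩
      · exact hne hA (by simpa using h2)
      · exact hne (hI.1 hp).2.1
          (append_cons_inj (hmT hp) (by simp) (h2.trans (List.nil_append _).symm)).1
    · simp at h1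
  have d2 : Disjoint T2 T3 := by
    rw [Finset.disjoint_left]
    intro l h1 h2
    simp only [T2, T3, Finset.mem_image] at h1 h2
    obtain ⟨A, hA, rfl⟩ := h1
    obtain ⟨p, hp, h2⟩ := h2
    exact hne (hI.1 hp).2.2
      (append_cons_inj (hmT hp) (fun h => hms ((hmem hA _).1 h)) h2).2
  rw [ascPoly, hT, Finset.sum_union d1, Finset.sum_union d2, add_assoc]
  congr 1
  · simp only [T1]
    split_ifs <;> simp [listAsc]
  · congr 1
    · rw [Finset.sum_image (by intro A _ A' _ h; simpa using h), ascPoly]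
      refine Finset.sum_congr rfl fun A hA => ?_
      rw [listAsc_append_cons m A [] (fun a ha => hm a ((hmem hA a).1 ha)) (by simp)]
      simp [listAsc]
    · rw [Finset.sum_image, Finset.sum_sigma, Finset.mul_sum]
      · refine Finset.sum_congr rfl fun u hu => ?_
        rw [ascPoly, ascPoly, Finset.sum_mul_sum, Finset.mul_sum, Finset.sum_product]
        refine Finset.sum_congr rfl fun A hA => ?_
        rw [Finset.mul_sum]
        refine Finset.sum_congr rfl fun B hB => ?_
        rw [Finset.mem_powerset] at hu
        rw [listAsc_append_cons m A B (fun a ha => hm a (hu ((hmem hA a).1 ha)))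
          (fun b hb => hm b (Finset.mem_sdiff.1 ((hmem hB b).1 hb)).1), if_neg (hne hB)]
        ring
      · rintro ⟨u, A, B⟩ hp ⟨u', A', B'⟩ hp' h
        obtain ⟨h1, h2⟩ := append_cons_inj (hmT hp) (hmT hp') h
        simp only at h1 h2
        subst h1 h2
        have : u = u' := by
          ext x
          rw [← hmem (hI.1 hp).2.1, ← hmem (hI.1 hp').2.1]
        subst this
        rfl

theorem ascPoly_eq_gammaPoly (s : Finset ℕ) : ascPoly s = gammaPoly s.card := by
  induction h : s.card using Nat.strong_induction_on generalizing s with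
  | _ n ih =>
  subst h
  rcases s.eq_empty_or_nonempty with rfl | hs
  · refine Finset.sum_eq_zero fun l hl => ?_
    rw [mem_ndrWords, val_eq_coe_iff, List.toFinset_eq_empty_iff] at hl
    exact absurd hl.1.2 hl.2.1
  · obtain ⟨m, t, hm, rfl⟩ : ∃ m t, (∀ x ∈ t, m < x) ∧ s = insert m t :=
      ⟨s.min' hs, s.erase (s.min' hs), fun x hx => s.min'_lt_of_mem_erase_min' hs hx,
        (Finset.insert_erase (s.min'_mem hs)).symm⟩
    have hmt : m ∉ t := fun h => lt_irrefl _ (hm m h)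
    rw [Finset.card_insert_of_notMem hmt] at ih ⊢
    rw [ascPoly_insert hm, gammaPoly_succ_eq_conv, ih t.card (by omega) t rfl]
    congr 2
    · simp
    · rw [gammaConv, Finset.Nat.sum_antidiagonal_eq_sum_range_succ
        (fun i j => t.card.choose i • (gammaPoly i * gammaPoly j)),
        ← Finset.sum_powerset_apply_card (fun i => gammaPoly i * gammaPoly (t.card - i))]
      refine Finset.sum_congr rfl fun u hu => ?_
      rw [Finset.mem_powerset] at hu
      have h1 := Finset.card_le_card hu
      have h2 := Finset.card_sdiff_of_subset hu
      rw [ih u.card (by omega) u rfl, ih (t \ u).card (by omega) _ rfl, h2]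

theorem listNDR_map_range' (w : ℕ → ℕ) (b : Bool) (a len : ℕ) :
    ListNDR b ((List.range' a (len + 1)).map w) ↔
      ∀ i, a ≤ i → i < a + len → w i < w (i + 1) →
        (i = a → b = false) ∧ (i ≠ a → ¬ w (i - 1) < w i) := by
  induction len generalizing a b with
  | zero =>
    simp only [List.range'_succ, List.range'_zero, List.map, ListNDR, true_iff]
    intro i h1 h2
    omega
  | succ len ih =>
    have ih := fun b => ih b (a + 1)
    rw [List.range'_succ, List.map_cons] at ih ⊢
    simp only [List.range'_succ, List.map_cons, ListNDR] at ih ⊢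
    rw [ih true, ih false]
    split_ifs with hlt
    · constructor
      · rintro ⟨hb, h⟩ i h1 h2 h3
        refine ⟨fun _ => hb, fun hne h4 => ?_⟩
        have := h i (by omega) (by omega) h3
        by_cases hi : i = a + 1
        · exact absurd (this.1 hi) (by simp)
        · exact this.2 hi h4
      · intro h
        refine ⟨(h a le_rfl (by omega) hlt).1 rfl, fun i h1 h2 h3 => ?_⟩
        have := (h i (by omega) (by omega) h3).2 (by omega)
        refine ⟨?_, fun _ => this⟩
        rintro rfl
        exact absurd hlt this
    · constructor
      · intro h i h1 h2 h3
        have hia : i ≠ a := by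
          rintro rfl
          exact hlt h3
        refine ⟨fun h => absurd h hia, fun _ => ?_⟩
        by_cases hi : i = a + 1
        · subst hi
          exact hlt
        · exact (h i (by omega) (by omega) h3).2 hi
      · intro h i h1 h2 h3
        exact ⟨fun _ => rfl, fun hi => (h i (by omega) (by omega) h3).2 (by omega)⟩

theorem listAsc_map_range' (w : ℕ → ℕ) (a len : ℕ) :
    listAsc ((List.range' a (len + 1)).map w) =
      ((Finset.Ico a (a + len)).filter fun i => w i < w (i + 1)).card := by
  rw [Finset.card_filter, Finset.sum_Ico_eq_sum_range, Nat.add_sub_cancel_left]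
  induction len generalizing a with
  | zero => simp [listAsc]
  | succ len ih =>
    have ih := ih (a + 1)
    rw [List.range'_succ, List.map_cons] at ih ⊢
    simp only [List.range'_succ, List.map_cons, listAsc] at ih ⊢
    rw [ih, Finset.sum_range_succ', add_comm]
    simp only [add_assoc, add_comm 1, add_zero]

/-- The one-line word of a permutation as a list. -/
def permList {m : ℕ} (σ : Equiv.Perm (Fin m)) : List ℕ := (List.range' 1 m).map (permWord σ)

theorem permWord_succ {m : ℕ} (σ : Equiv.Perm (Fin m)) (i : Fin m) :
    permWord σ (i + 1) = σ i + 1 := by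
  have := i.2
  simp [permWord]

theorem listNDR_permList {n : ℕ} (σ : Equiv.Perm (Fin (n + 1))) :
    ListNDR true (permList σ) ↔ NoDoubleRise σ := by
  have h0 : permWord σ 0 = 0 := by simp [permWord]
  have h1 : permWord σ 1 = σ 0 + 1 := permWord_succ σ 0
  have hlast : permWord σ (n + 2) = 0 := by simp [permWord]
  rw [permList, listNDR_map_range']
  unfold NoDoubleRise
  constructor
  · rintro h i hi ⟨h2, h3⟩
    rw [Finset.mem_Icc] at hi
    by_cases hin : i = n + 1
    · subst hin
      rw [hlast] at h3
      exact absurd h3 (Nat.not_lt_zero _)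
    · have := h i hi.1 (by omega) h3
      by_cases hi1 : i = 1
      · exact absurd (this.1 hi1) (by simp)
      · exact this.2 hi1 h2
  · intro h i hi1 hi2 h3
    have := h i (by rw [Finset.mem_Icc]; omega)
    refine ⟨?_, fun _ h4 => this ⟨h4, h3⟩⟩
    rintro rfl
    exact absurd ⟨by simp [h0, h1], h3⟩ this

theorem listAsc_permList {n : ℕ} (σ : Equiv.Perm (Fin (n + 1))) :
    listAsc (permList σ) = ascCount σ := by
  rw [permList, listAsc_map_range', ascCount]
  congr 2
  ext i
  simp only [Finset.mem_Ico, Finset.mem_Icc]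
  omega

theorem permList_injective {m : ℕ} : Function.Injective (permList (m := m)) := by
  intro σ τ h
  rw [permList, permList, List.map_inj_left] at h
  ext i
  have := h (i + 1) (by rw [List.mem_range'_1]; omega)
  rw [permWord_succ, permWord_succ] at this
  omega

theorem exists_permList_eq {m : ℕ} {l : List ℕ} :
    (Finset.Icc 1 m).val = ↑l ↔ ∃ σ : Equiv.Perm (Fin m), permList σ = l := by
  rw [val_eq_coe_iff]
  constructor
  · rintro ⟨hn, hl⟩
    have hlen : l.length = m := by
      rw [← List.toFinset_card_of_nodup hn, hl]
      simp
    have hmem : ∀ x, x ∈ l ↔ 1 ≤ x ∧ x ≤ m := fun x => by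
      rw [← List.mem_toFinset, hl, Finset.mem_Icc]
    subst hlen
    let g : Fin l.length → Fin l.length := fun i =>
      ⟨l[i] - 1, by
        have := (hmem l[i]).1 (by simp)
        omega⟩
    have hg : Function.Injective g := by
      intro i j hij
      have h1 := (hmem l[i]).1 (by simp)
      have h2 := (hmem l[j]).1 (by simp)
      have h3 : l[i] - 1 = l[j] - 1 := congrArg Fin.val hij
      have h4 : l[i] = l[j] := by omega
      exact Fin.ext (hn.getElem_inj_iff.1 h4)
    refine ⟨Equiv.ofBijective g (Finite.injective_iff_bijective.1 hg), ?_⟩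
    refine List.ext_getElem (by simp [permList]) fun i h1 h2 => ?_
    have := (hmem l[i]).1 (by simp)
    simp only [permList, List.getElem_map, List.getElem_range']
    rw [one_mul, add_comm, permWord_succ _ ⟨i, h2⟩]
    simp only [Equiv.ofBijective_apply, g, Fin.getElem_fin]
    omega
  · rintro ⟨σ, rfl⟩
    have hi : ∀ i ∈ List.range' 1 m, ∃ j : Fin m, i = j + 1 := fun i hi => by
      rw [List.mem_range'_1] at hi
      exact ⟨⟨i - 1, by omega⟩, by simp; omega⟩
    refine ⟨List.Nodup.map_on ?_ List.nodup_range', ?_⟩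
    · intro x hx y hy hxy
      obtain ⟨i, rfl⟩ := hi x hx
      obtain ⟨j, rfl⟩ := hi y hy
      rw [permWord_succ, permWord_succ] at hxy
      rw [σ.injective (Fin.ext (Nat.succ_injective hxy))]
    · ext x
      rw [permList, List.mem_toFinset, List.mem_map, Finset.mem_Icc]
      constructor
      · rintro ⟨y, hy, rfl⟩
        obtain ⟨i, rfl⟩ := hi y hy
        rw [permWord_succ]
        omega
      · intro hx
        refine ⟨σ.symm ⟨x - 1, by omega⟩ + 1, ?_, ?_⟩
        · rw [List.mem_range'_1]
          omega
        · rw [permWord_succ, Equiv.apply_symm_apply]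
          simp
          omega

/-- The coefficients of `gammaPoly` count permutations without double rises by ascents. -/
theorem card_noDoubleRise (n k : ℕ) :
    (Nat.card {σ : Equiv.Perm (Fin (n + 1)) // ascCount σ = k ∧ NoDoubleRise σ} : ℤ) =
      (gammaPoly (n + 1)).coeff k := by
  classical
  have h : (gammaPoly (n + 1)).coeff k =
      ((ndrWords (Finset.Icc 1 (n + 1))).filter fun l => listAsc l = k).card := by
    have := ascPoly_eq_gammaPoly (Finset.Icc 1 (n + 1))
    rw [Nat.card_Icc, Nat.add_sub_cancel] at this
    rw [← this, ascPoly, Polynomial.finsetSum_coeff, Finset.card_filter]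
    simp [Polynomial.coeff_X_pow, eq_comm]
  rw [h, Nat.card_eq_fintype_card, Fintype.card_subtype, Nat.cast_inj]
  refine Finset.card_bij (fun σ _ => permList σ) ?_ (fun σ _ τ _ h => permList_injective h) ?_
  · intro σ hσ
    simp only [Finset.mem_filter, Finset.mem_univ, true_and] at hσ
    rw [Finset.mem_filter, mem_ndrWords, listNDR_permList, listAsc_permList]
    exact ⟨⟨exists_permList_eq.2 ⟨σ, rfl⟩, by simp [permList], hσ.2⟩, hσ.1⟩
  · intro l hl
    rw [Finset.mem_filter, mem_ndrWords, exists_permList_eq] at hl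
    obtain ⟨⟨⟨σ, rfl⟩, -, h1⟩, h2⟩ := hl
    rw [listNDR_permList] at h1
    rw [listAsc_permList] at h2
    exact ⟨σ, by simp [h1, h2], rfl⟩

/-- The number of right-aligned ways to place the rooks of `c` given rows in one block. -/
def fiberCount : ℕ → ℕ
  | 0 => 1
  | 1 => 1
  | 2 => 2
  | _ + 3 => 0

open Polynomial in
/-- The weight of a block holding `c` rooks: `fiberCount c`, marked by `X` if `c = 2`. -/
noncomputable def fiberWeight (c : ℕ) : ℤ[X] :=
  (fiberCount c : ℤ[X]) * X ^ (if c = 2 then 1 else 0)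

/-- The size of the fiber of `f` over `b`. -/
def fiberSize {n : ℕ} (f : Fin n → ℕ) (b : ℕ) : ℕ := (Finset.univ.filter fun i => f i = b).card

/-- The ways to choose a block for every row of `2δ_n`. -/
def blockMaps (n : ℕ) : Finset (Fin n → ℕ) :=
  Fintype.piFinset fun i : Fin n => Finset.range (i + 1)

open Polynomial in
/-- The enumerator of right-aligned placements on `2δ_n` by blocks with two rooks. -/
noncomputable def rookPoly (n : ℕ) : ℤ[X] :=
  ∑ f ∈ blockMaps n, ∏ b ∈ Finset.range n, fiberWeight (fiberSize f b)

theorem lt_of_mem_blockMaps {n : ℕ} {f : Fin n → ℕ} (hf : f ∈ blockMaps n) (i : Fin n) :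
    f i < i + 1 :=
  Finset.mem_range.1 (Fintype.mem_piFinset.1 hf i)

open Polynomial in
theorem fiberWeight_succ (c : ℕ) :
    fiberWeight (c + 1) = (1 - (c : ℤ[X]) + 2 * (c : ℤ[X]) * X) * fiberWeight c
      + (X - 4 * X ^ 2) * derivative (fiberWeight c) := by
  match c with
  | 0 => simp [fiberWeight, fiberCount]
  | 1 => simp [fiberWeight, fiberCount]
  | 2 =>
    simp [fiberWeight, fiberCount]
    ring
  | c + 3 => simp [fiberWeight, fiberCount]

open Polynomial in
theorem sum_prod_fiberWeight (s : Finset ℕ) (c : ℕ → ℕ) :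
    ∑ b ∈ s, ∏ b' ∈ s, fiberWeight (c b' + if b' = b then 1 else 0) =
      ((s.card : ℤ[X]) - ((∑ b ∈ s, c b : ℕ) : ℤ[X]) + 2 * ((∑ b ∈ s, c b : ℕ) : ℤ[X]) * X) * ∏ b ∈ s, fiberWeight (c b)
        + (X - 4 * X ^ 2) * derivative (∏ b ∈ s, fiberWeight (c b)) := by
  have h1 : ∀ b ∈ s, ∏ b' ∈ s, fiberWeight (c b' + if b' = b then 1 else 0) =
      (1 - (c b : ℤ[X]) + 2 * (c b : ℤ[X]) * X) * ∏ b ∈ s, fiberWeight (c b) +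
      (X - 4 * X ^ 2) * ((∏ b' ∈ s.erase b, fiberWeight (c b')) *
        derivative (fiberWeight (c b))) := by
    intro b hb
    rw [← Finset.mul_prod_erase s _ hb, ← Finset.mul_prod_erase s (fun b => fiberWeight (c b)) hb,
      if_pos rfl, fiberWeight_succ,
      Finset.prod_congr rfl (g := fun b' => fiberWeight (c b'))
        (fun b' hb' => by rw [if_neg (Finset.ne_of_mem_erase hb'), add_zero])]
    ring
  rw [Finset.sum_congr rfl h1, Finset.sum_add_distrib, ← Finset.mul_sum, ← Finset.sum_mul,
    derivative_prod_finset]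
  congr 2
  rw [Finset.sum_add_distrib, Finset.sum_sub_distrib, ← Finset.sum_mul, ← Finset.mul_sum]
  simp

theorem sum_fiberSize {n : ℕ} {f : Fin n → ℕ} (hf : f ∈ blockMaps n) :
    ∑ b ∈ Finset.range n, fiberSize f b = n := by
  have := Finset.card_eq_sum_card_fiberwise (s := Finset.univ) (t := Finset.range n) (f := f)
    fun i _ => by
      have := lt_of_mem_blockMaps hf i
      simp
      omega
  rw [Finset.card_univ, Fintype.card_fin] at this
  exact this.symm

theorem fiberSize_snoc {n : ℕ} (f : Fin n → ℕ) (b b' : ℕ) :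
    fiberSize (Fin.snoc (α := fun _ => ℕ) f b) b' = fiberSize f b' + if b' = b then 1 else 0 := by
  simp only [fiberSize, Finset.card_filter, Fin.sum_univ_castSucc, Fin.snoc_castSucc,
    Fin.snoc_last, eq_comm]

theorem fiberSize_self {n : ℕ} {f : Fin n → ℕ} (hf : f ∈ blockMaps n) : fiberSize f n = 0 := by
  rw [fiberSize, Finset.card_eq_zero, Finset.filter_eq_empty_iff]
  intro i _
  have := lt_of_mem_blockMaps hf i
  omega

theorem sum_blockMaps_succ {M : Type*} [AddCommMonoid M] {n : ℕ} (F : (Fin (n + 1) → ℕ) → M) :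
    ∑ f ∈ blockMaps (n + 1), F f =
      ∑ f ∈ blockMaps n, ∑ b ∈ Finset.range (n + 1), F (Fin.snoc (α := fun _ => ℕ) f b) := by
  rw [← Finset.sum_product']
  refine (Finset.sum_bij' (fun p _ => Fin.snoc (α := fun _ => ℕ) p.1 p.2)
    (fun f _ => (Fin.init f, f (Fin.last n))) ?_ ?_ ?_ ?_ ?_).symm
  · rintro ⟨f, b⟩ h
    simp only [blockMaps, Finset.mem_product, Fintype.mem_piFinset] at h ⊢
    intro i
    induction i using Fin.lastCases with
    | last => simpa using h.2
    | cast i => simpa using h.1 i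
  · intro f h
    simp only [blockMaps, Finset.mem_product, Fintype.mem_piFinset] at h ⊢
    exact ⟨fun i => h i.castSucc, h (Fin.last n)⟩
  · rintro ⟨f, b⟩ h
    simp
  · intro f h
    simp
  · intros
    rfl

theorem rookPoly_eq_gammaPoly (n : ℕ) : rookPoly n = gammaPoly (n + 1) := by
  induction n with
  | zero => simp [rookPoly, gammaPoly, blockMaps]
  | succ n ih =>
    rw [gammaPoly, ← ih, rookPoly, sum_blockMaps_succ, rookPoly, gammaStep,
      Polynomial.derivative_sum, Finset.mul_sum, Finset.mul_sum, ← Finset.sum_add_distrib]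
    refine Finset.sum_congr rfl fun f hf => ?_
    simp only [fiberSize_snoc]
    rw [sum_prod_fiberWeight, Finset.sum_range_succ, Finset.prod_range_succ, fiberSize_self hf,
      sum_fiberSize hf]
    simp [fiberWeight, fiberCount]

/-- A choice `g` of columns (`true` for the right one) for the rooks of one block
is non-attacking and right-aligned. -/
def IsFiberPlacement {α : Type} (g : α → Bool) : Prop :=
  Function.Injective g ∧ ∀ _ : α, ∃ j, g j = true

theorem card_isFiberPlacement (α : Type) [Fintype α] :
    Nat.card {g : α → Bool // IsFiberPlacement g} = fiberCount (Fintype.card α) := by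
  have e : {g : α → Bool // IsFiberPlacement g} ≃
      {g : Fin (Fintype.card α) → Bool // IsFiberPlacement g} :=
    (Equiv.arrowCongr (Fintype.equivFin α) (Equiv.refl Bool)).subtypeEquiv fun g => by
      let s := (Fintype.equivFin α).symm
      refine and_congr (Equiv.injective_comp (Fintype.equivFin α).symm g).symm ⟨fun h i => ?_, fun h i => ?_⟩
      · obtain ⟨j, hj⟩ := h (s i)
        exact ⟨s.symm j, by simpa [s] using hj⟩
      · obtain ⟨j, hj⟩ := h (s.symm i)
        exact ⟨_, hj⟩
  rw [Nat.card_congr e]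
  generalize Fintype.card α = c
  have hd : ∀ c (g : Fin c → Bool), IsFiberPlacement g ↔
      (∀ i j, g i = g j → i = j) ∧ ∀ _ : Fin c, ∃ j, g j = true := fun _ _ => Iff.rfl
  simp only [hd]
  match c with
  | 0 => rw [Nat.card_eq_fintype_card]; decide
  | 1 => rw [Nat.card_eq_fintype_card]; decide
  | 2 => rw [Nat.card_eq_fintype_card]; decide
  | c + 3 =>
    rw [fiberCount, Nat.card_eq_zero]
    left
    constructor
    rintro ⟨g, hg, -⟩
    have := Fintype.card_le_of_injective g hg
    simp at this

/-- The column choices making the block assignment `f` a right-aligned placement. -/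
def IsColumnChoice {n : ℕ} (f : Fin n → ℕ) (e : Fin n → Bool) : Prop :=
  (∀ i j, f i = f j → e i = e j → i = j) ∧ ∀ i, ∃ j, f j = f i ∧ e j = true

theorem card_isColumnChoice {n : ℕ} {f : Fin n → ℕ} (hf : f ∈ blockMaps n) :
    Nat.card {e // IsColumnChoice f e} =
      ∏ b ∈ Finset.range n, fiberCount (fiberSize f b) := by
  have hlt : ∀ i, f i < n := fun i => by
    have := lt_of_mem_blockMaps hf i
    omega
  let f' : Fin n → Fin n := fun i => ⟨f i, hlt i⟩
  let e₁ : (Fin n → Bool) ≃ ((b : Fin n) → {i // f' i = b} → Bool) :=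
    ((Equiv.sigmaFiberEquiv f').symm.arrowCongr (Equiv.refl Bool)).trans 
      (Equiv.piCurry fun _ _ => Bool)
  have e₂ : {e // IsColumnChoice f e} ≃
      {e : (b : Fin n) → {i // f' i = b} → Bool // ∀ b, IsFiberPlacement (e b)} :=
    e₁.subtypeEquiv fun e => by
      constructor
      · rintro ⟨h1, h2⟩ b
        refine ⟨fun i j hij => ?_, fun i => ?_⟩
        · exact Subtype.ext (h1 i j (congrArg Fin.val (i.2.trans j.2.symm)) hij)
        · obtain ⟨j, hj, hj'⟩ := h2 i
          exact ⟨⟨j, (Fin.ext hj : f' j = f' i).trans i.2⟩, hj'⟩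
      · intro h
        refine ⟨fun i j hij hij' => ?_, fun i => ?_⟩
        · exact congrArg Subtype.val (@(h (f' j)).1 ⟨i, Fin.ext hij⟩ ⟨j, rfl⟩ hij')
        · obtain ⟨j, hj⟩ := (h (f' i)).2 ⟨i, rfl⟩
          exact ⟨j, congrArg Fin.val j.2, hj⟩
  rw [Nat.card_congr (e₂.trans Equiv.subtypePiEquivPi), Nat.card_pi, Finset.prod_range]
  refine Finset.prod_congr rfl fun b _ => ?_
  rw [card_isFiberPlacement, Fintype.card_subtype, fiberSize]
  simp [f', Fin.ext_iff]

/-- The number of blocks with two rooks. -/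
def doubleCount {n : ℕ} (f : Fin n → ℕ) : ℕ :=
  ∑ b ∈ Finset.range n, if fiberSize f b = 2 then 1 else 0

theorem coeff_rookPoly (n k : ℕ) : (rookPoly n).coeff k =
    ∑ f ∈ (blockMaps n).filter (fun f => doubleCount f = k),
      ((∏ b ∈ Finset.range n, fiberCount (fiberSize f b) : ℕ) : ℤ) := by
  rw [rookPoly, Polynomial.finsetSum_coeff, Finset.sum_filter]
  refine Finset.sum_congr rfl fun f _ => ?_
  simp only [fiberWeight]
  rw [Finset.prod_mul_distrib, Finset.prod_pow_eq_pow_sum, ← doubleCount, ← Nat.cast_prod,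
    ← Polynomial.C_eq_natCast, Polynomial.coeff_C_mul, Polynomial.coeff_X_pow]
  simp [eq_comm]

theorem IsColumnChoice.fiberSize_le {n : ℕ} {f : Fin n → ℕ} {e : Fin n → Bool}
    (h : IsColumnChoice f e) (b : ℕ) : fiberSize f b ≤ 2 := by
  rw [fiberSize, ← Fintype.card_bool, ← Finset.card_univ]
  refine Finset.card_le_card_of_injOn e (fun _ _ => Finset.mem_univ _) ?_
  intro i hi j hj hij
  simp at hi hj
  exact h.1 i j (hi.trans hj.symm) hij

theorem IsColumnChoice.sum_single {n : ℕ} {f : Fin n → ℕ} {e : Fin n → Bool}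
    (h : IsColumnChoice f e) (hf : f ∈ blockMaps n) :
    (∑ b ∈ Finset.range n, if fiberSize f b = 1 then 1 else 0) + 2 * doubleCount f = n := by
  refine Eq.trans ?_ (sum_fiberSize hf)
  rw [doubleCount, Finset.mul_sum, ← Finset.sum_add_distrib]
  refine Finset.sum_congr rfl fun b _ => ?_
  have := h.fiberSize_le b
  split_ifs <;> omega

/-- The block assignment of a placement. -/
def rookBlock {n : ℕ} (R : RookPlacement n) (i : Fin n) : ℕ := (R.1 i : ℕ) / 2

/-- The column choice of a placement. -/
def rookColumn {n : ℕ} (R : RookPlacement n) (i : Fin n) : Bool := decide ((R.1 i : ℕ) % 2 = 1)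

theorem rookBlock_mem {n : ℕ} (R : RookPlacement n) : rookBlock R ∈ blockMaps n := by
  refine Fintype.mem_piFinset.2 fun i => ?_
  have := R.2.2 i
  rw [Finset.mem_range, rookBlock]
  omega

theorem bor_eq_s7 {n : ℕ} (R : RookPlacement n) :
    bor R = ∑ b ∈ Finset.range n, if fiberSize (rookBlock R) b = 1 then 1 else 0 := by
  rw [bor, Finset.card_filter, Finset.sum_range]
  rfl

theorem isColumnChoice_rookColumn {n : ℕ} (R : RookPlacement n) :
    IsColumnChoice (rookBlock R) (rookColumn R) ↔ RightAligned R := by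
  have hlt : ∀ i, (R.1 i : ℕ) / 2 < n := fun i => by
    have := (R.1 i).2
    omega
  constructor
  · rintro ⟨-, h⟩ b ⟨i, hi⟩
    obtain ⟨j, hj, hj'⟩ := h i
    simp only [rookBlock, rookColumn, decide_eq_true_eq] at hj hj'
    exact ⟨j, by omega⟩
  · refine fun h => ⟨fun i j h1 h2 => R.2.1 (Fin.ext ?_), fun i => ?_⟩
    · simp only [rookBlock, rookColumn, decide_eq_decide] at h1 h2
      omega
    · simp only [rookBlock, rookColumn, decide_eq_true_eq]
      by_cases hi : (R.1 i : ℕ) % 2 = 1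
      · exact ⟨i, rfl, hi⟩
      · obtain ⟨j, hj⟩ := h ⟨(R.1 i : ℕ) / 2, hlt i⟩ ⟨i, by simp only; omega⟩
        simp only at hj
        exact ⟨j, by omega, by omega⟩

theorem exists_rookPlacement {n : ℕ} {f : Fin n → ℕ} {e : Fin n → Bool} (hf : f ∈ blockMaps n)
    (h : IsColumnChoice f e) : ∃ R : RookPlacement n, rookBlock R = f ∧ rookColumn R = e := by
  have hlt := lt_of_mem_blockMaps hf
  have he : ∀ i, (e i).toNat < 2 := fun i => Bool.toNat_lt _
  refine ⟨⟨fun i => ⟨2 * f i + (e i).toNat, ?_⟩, ?_, ?_⟩, ?_, ?_⟩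
  · have := hlt i
    have := he i
    omega
  · intro i j hij
    have := he i
    have := he j
    have hij : 2 * f i + (e i).toNat = 2 * f j + (e j).toNat := congrArg Fin.val hij
    refine h.1 i j (by omega) ?_
    have he' : (e i).toNat = (e j).toNat := by omega
    revert he'
    cases e i <;> cases e j <;> simp
  · intro i
    have := hlt i
    have := he i
    simp only
    omega
  · ext i
    have := he i
    simp only [rookBlock]
    omega
  · ext i
    have h2 : ∀ (a : ℕ) (c : Bool), decide ((2 * a + c.toNat) % 2 = 1) = c := by
      intro a c
      cases c <;> simp
    exact h2 (f i) (e i)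

/-- The coefficients of `gammaPoly` count right-aligned placements. -/
theorem card_rightAligned (n k : ℕ) (hk : 2 * k ≤ n) :
    (Nat.card {R : RookPlacement n // RightAligned R ∧ bor R = n - 2 * k} : ℤ) =
      (gammaPoly (n + 1)).coeff k := by
  rw [← rookPoly_eq_gammaPoly, coeff_rookPoly, ← Nat.cast_sum, Nat.cast_inj]
  let S := (blockMaps n).filter fun f => doubleCount f = k
  have hiff : ∀ R : RookPlacement n, RightAligned R →
      (bor R = n - 2 * k ↔ doubleCount (rookBlock R) = k) := fun R hR => by
    have := ((isColumnChoice_rookColumn R).2 hR).sum_single (rookBlock_mem R)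
    rw [← bor_eq_s7] at this
    omega
  let φ : {R : RookPlacement n // RightAligned R ∧ bor R = n - 2 * k} →
      Σ f : S, {e // IsColumnChoice f.1 e} := fun R =>
    ⟨⟨rookBlock R.1, Finset.mem_filter.2 ⟨rookBlock_mem R.1, (hiff R.1 R.2.1).1 R.2.2⟩⟩,
      ⟨rookColumn R.1, (isColumnChoice_rookColumn R.1).2 R.2.1⟩⟩
  have hφ : Function.Bijective φ := by
    constructor
    · intro R R' h
      have h1 : rookBlock R.1 = rookBlock R'.1 := congrArg (fun p => p.1.1) h
      have h2 : rookColumn R.1 = rookColumn R'.1 := congrArg (fun p => p.2.1) h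
      refine Subtype.ext (Subtype.ext (funext fun i => Fin.ext ?_))
      have h1 := congrFun h1 i
      have h2 := congrFun h2 i
      simp only [rookBlock, rookColumn, decide_eq_decide] at h1 h2
      omega
    · rintro ⟨⟨f, hf⟩, e, he⟩
      obtain ⟨hf1, hf2⟩ := Finset.mem_filter.1 hf
      obtain ⟨R, rfl, rfl⟩ := exists_rookPlacement hf1 he
      have hR := (isColumnChoice_rookColumn R).1 he
      exact ⟨⟨R, hR, (hiff R hR).2 hf2⟩, rfl⟩
  rw [Nat.card_eq_of_bijective φ hφ, Nat.card_sigma, ← Finset.sum_coe_sort S]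
  exact Finset.sum_congr rfl fun f _ => card_isColumnChoice (Finset.mem_filter.1 f.2).1

/-- The number of right-aligned rook placements on `2δ_n` having exactly
`n - 2k` blocks with exactly one rook equals the number of permutations of
`{1, …, n+1}` with exactly `k` ascents such that every ascent is a valley
(i.e. with no double rises). -/
theorem right_aligned_count_eq_gamma (n k : ℕ) (hk : 2 * k ≤ n) :
    Nat.card {R : RookPlacement n // RightAligned R ∧ bor R = n - 2 * k} =
      Nat.card {σ : Equiv.Perm (Fin (n + 1)) // ascCount σ = k ∧ NoDoubleRise σ} := by
  rw [← Nat.cast_inj (R := ℤ), card_rightAligned n k hk, card_noDoubleRise]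
end
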